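/- arXiv:1706.06036 — 2 statements merged into one kernel-verified Lean document; each statement's English description precedes it below -/
import Mathlib

section
/- There is no 4-claw-free distance-regular graph with diameter 3 whose intersection array is {15,8,1;1,8,15}, {125,78,1;1,26,125}, {155,96,1;1,32,155}, {275,168,1;1,56,275}, {575,348,1;1,116,575}, or {715,432,25;1,80,675}. -/
/-!
Let `x` be a vertex and `y, z` two non-adjacent neighbours of `x`. Without 4-claws, the neighbours
of `x` that are different from and non-adjacent to both `y` and `z` are pairwise adjacent, so
together with `x` they form a clique (`clique_of_no_claw`). Since `x, y` and `x, z` have `a₁` common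
neighbours each, this clique has at least `1 + k - 2 - 2 a₁ + l` vertices, where `l` is the number
of common neighbours of `x, y, z` (`card_farSet`).

On the other hand `-5` is the smallest eigenvalue for each of the six arrays, and the Delsarte bound
limits cliques to `1 + k / 5` vertices. The bound is obtained (`clique_bound`) from the cosine
sequence `u` of `-5`: the matrix `M = (u (dist x y))` satisfies `M * M = κ • M` with `κ > 0`, hence
is positive semidefinite, and its quadratic form at the indicator vector of a clique with `s`
vertices is `s * (u 0 + (s - 1) * u 1)`.

For the last five arrays `1 + k - 2 - 2 a₁ > 1 + k / 5` already. For `{15,8,1;1,8,15}` the value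
`l = 3` would be needed; here the antipodal map sends the common neighbours of `y` and `z` at
distance 2 from `x` injectively to the neighbours of `x` far from `y` and `z`, which forces
at least four of the latter (`taylor_card`).
-/

open SimpleGraph Finset

/-- `G` is a distance-regular graph with diameter `D` and intersection numbers
`b i` (number of neighbours of `y` at distance `i+1` from `x` when `dist x y = i`) and
`c i` (number of neighbours of `y` at distance `i-1` from `x` when `dist x y = i`). -/
def IsDRG {V : Type*} [Fintype V] (G : SimpleGraph V) (D : ℕ) (b c : ℕ → ℕ) : Prop :=
  G.Connected ∧
  (∃ x y : V, G.dist x y = D) ∧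
  (∀ x y : V, G.dist x y ≤ D) ∧
  c 0 = 0 ∧ c 1 = 1 ∧ b D = 0 ∧
  (∀ i ≤ D, ∀ x y : V, G.dist x y = i →
    {z : V | G.Adj y z ∧ G.dist x z = i - 1}.ncard = c i ∧
    {z : V | G.Adj y z ∧ G.dist x z = i + 1}.ncard = b i)

/-- `G` contains a `t`-claw: a vertex together with `t` pairwise nonadjacent neighbours
(an induced `K_{1,t}`). -/
def HasClaw {V : Type*} (G : SimpleGraph V) (t : ℕ) : Prop :=
  ∃ (x : V) (s : Finset V), s.card = t ∧ (∀ y ∈ s, G.Adj x y) ∧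
    (s : Set V).Pairwise fun y z => ¬ G.Adj y z

/-- `θ` is an eigenvalue of the (real) adjacency matrix of `G`. -/
def IsAdjEigenvalue {V : Type*} [Fintype V] (G : SimpleGraph V) [DecidableRel G.Adj]
    (θ : ℝ) : Prop :=
  ∃ v : V → ℝ, v ≠ 0 ∧ (G.adjMatrix ℝ).mulVec v = θ • v

/-- `G` contains an induced quadrangle: vertices `x, z₁, y, z₂` with
`dist x y = dist z₁ z₂ = 2` inducing a 4-cycle. -/
def HasQuadrangle {V : Type*} (G : SimpleGraph V) : Prop :=
  ∃ x z₁ y z₂ : V, G.dist x y = 2 ∧ G.dist z₁ z₂ = 2 ∧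
    G.Adj x z₁ ∧ G.Adj z₁ y ∧ G.Adj y z₂ ∧ G.Adj z₂ x

/-- The diameter-3 intersection array `{β₀,β₁,β₂; γ₁,γ₂,γ₃}`. -/
def arr3 (b c : ℕ → ℕ) (β₀ β₁ β₂ γ₁ γ₂ γ₃ : ℕ) : Prop :=
  b 0 = β₀ ∧ b 1 = β₁ ∧ b 2 = β₂ ∧ c 1 = γ₁ ∧ c 2 = γ₂ ∧ c 3 = γ₃

/-! ### The Delsarte clique bound -/

/-- The action of the adjacency matrix on functions of the distance to a fixed vertex: if
`f w = h (dist x w)`, then the sum of `f` over the neighbours of `y` is `nbrOp b c h (dist x y)`.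
It equals `c i * h (i - 1) + a i * h i + b i * h (i + 1)` with `a i = b 0 - b i - c i`. -/
def nbrOp (b c : ℕ → ℕ) (h : ℕ → ℝ) (i : ℕ) : ℝ :=
  b 0 * h i + c i * (h (i - 1) - h i) + b i * (h (i + 1) - h i)

/-- The matrix with entries `h (dist x y)`; for `h` the indicator of `i` it is the `i`-th distance
matrix. -/
noncomputable def distMat {V : Type*} (G : SimpleGraph V) (h : ℕ → ℝ) : Matrix V V ℝ :=
  Matrix.of fun x y => h (G.dist x y)

/-- The indicator function of `j`. -/
def ind (j : ℕ) : ℕ → ℝ := fun i => if i = j then 1 else 0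

section
variable {V : Type*} [Fintype V] {G : SimpleGraph V} {b c : ℕ → ℕ}

open Classical in
lemma degree_eq (hdrg : IsDRG G 3 b c) (y : V) : #{w | G.Adj y w} = b 0 := by
  obtain ⟨hconn, -, -, -, -, -, h⟩ := hdrg
  rw [← (h 0 (by norm_num) y y (by simp)).2, Set.ncard_eq_toFinset_card']
  congr 1
  ext w
  simp [SimpleGraph.dist_eq_one_iff_adj]

open Classical in
lemma sum_neighbors (hdrg : IsDRG G 3 b c) (h : ℕ → ℝ) (x y : V) :
    ∑ w with G.Adj y w, h (G.dist x w) = nbrOp b c h (G.dist x y) := by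
  have hdeg := degree_eq hdrg y
  obtain ⟨hconn, -, hD, -, -, -, hn⟩ := hdrg
  set i := G.dist x y with hi
  obtain ⟨hc, hb⟩ := hn i (hD x y) x y rfl
  -- For `i = 0` the indices `i - 1` and `i` coincide, and the corresponding term vanishes.
  have key : ∀ w, G.Adj y w → h (G.dist x w) = h i
      + (if G.dist x w = i - 1 then (h (i - 1) - h i) else 0)
      + (if G.dist x w = i + 1 then (h (i + 1) - h i) else 0) := by
    intro w hw
    have h1 : G.dist x w ≤ i + 1 := by
      have := hconn.dist_triangle (u := x) (v := y) (w := w)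
      rwa [SimpleGraph.dist_eq_one_iff_adj.2 hw] at this
    have h2 : i ≤ G.dist x w + 1 := by
      have := hconn.dist_triangle (u := x) (v := w) (w := y)
      rwa [SimpleGraph.dist_eq_one_iff_adj.2 hw.symm] at this
    have h3 : G.dist x w = i - 1 ∨ G.dist x w = i ∨ G.dist x w = i + 1 := by omega
    rcases h3 with h3 | h3 | h3
    · have : i - 1 ≠ i + 1 := by omega
      simp [h3, this]
    · rcases Nat.eq_zero_or_pos i with h0 | h0
      · simp [h3, h0]
      · have : i ≠ i - 1 := by omega
        simp [h3, this]
    · have : i + 1 ≠ i - 1 := by omega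
      simp [h3, this]
  rw [Finset.sum_congr rfl (fun w hw => key w (by simpa using hw)), Finset.sum_add_distrib,
    Finset.sum_add_distrib, ← Finset.sum_filter, ← Finset.sum_filter, Finset.filter_filter,
    Finset.filter_filter]
  simp only [Finset.sum_const, nsmul_eq_mul, hdeg]
  rw [Set.ncard_eq_toFinset_card'] at hc hb
  rw [nbrOp, ← hc, ← hb]
  simp only [Set.toFinset_ofPred]

lemma distMat_congr (hdrg : IsDRG G 3 b c) {h h' : ℕ → ℝ} (hh : ∀ i ≤ 3, h i = h' i) :
    distMat G h = distMat G h' := by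
  ext x y
  exact hh _ (hdrg.2.2.1 x y)

open Classical in
lemma ind_one_mul (hdrg : IsDRG G 3 b c) (h : ℕ → ℝ) :
    distMat G (ind 1) * distMat G h = distMat G (nbrOp b c h) := by
  ext x y
  simp only [Matrix.mul_apply, distMat, Matrix.of_apply, ind, SimpleGraph.dist_eq_one_iff_adj,
    ite_mul, one_mul, zero_mul]
  rw [← Finset.sum_filter, SimpleGraph.dist_comm, ← sum_neighbors hdrg]
  simp only [SimpleGraph.dist_comm]

open Classical in
lemma distMat_ind_zero (hdrg : IsDRG G 3 b c) : distMat G (ind 0) = 1 := by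
  ext x y
  simp [distMat, ind, Matrix.one_apply, hdrg.1.dist_eq_zero_iff]

/-- If `u` is a cosine sequence for `θ`, the matrix `M = distMat G u` is a multiple of the projection
onto the `θ`-eigenspace; `κ` is expressed through the eigenvalues `1, θ, v₂, v₃` of the distance
matrices on that eigenspace. -/
lemma distMat_sq (hdrg : IsDRG G 3 b c) (u : ℕ → ℝ) (θ v₂ v₃ : ℝ)
    (hu : ∀ i ≤ 3, nbrOp b c u i = θ * u i) (hc2 : c 2 ≠ 0) (hc3 : c 3 ≠ 0)
    (hv2 : c 2 * v₂ = θ * θ - (b 0 - 1 - b 1) * θ - b 0)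
    (hv3 : c 3 * v₃ = θ * v₂ - b 1 * θ - (b 0 - b 2 - c 2) * v₂) :
    distMat G u * distMat G u = (u 0 + u 1 * θ + u 2 * v₂ + u 3 * v₃) • distMat G u := by
  classical
  have hb3 : b 3 = 0 := hdrg.2.2.2.2.2.1
  have hc1 : c 1 = 1 := hdrg.2.2.2.2.1
  have hc0 : c 0 = 0 := hdrg.2.2.2.1
  set M := distMat G u with hM
  have h0 : distMat G (ind 0) * M = M := by rw [distMat_ind_zero hdrg, one_mul]
  have h1 : distMat G (ind 1) * M = θ • M := by
    rw [hM, ind_one_mul hdrg, distMat_congr hdrg hu]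
    ext x y; simp [distMat]
  have e1 : distMat G (ind 1) * distMat G (ind 1) = (b 0 : ℝ) • distMat G (ind 0)
      + ((b 0 : ℝ) - 1 - b 1) • distMat G (ind 1) + (c 2 : ℝ) • distMat G (ind 2) := by
    rw [ind_one_mul hdrg, distMat_congr hdrg
      (h' := fun i => b 0 * ind 0 i + ((b 0 : ℝ) - 1 - b 1) * ind 1 i + c 2 * ind 2 i)]
    · ext x y; simp [distMat]
    · intro i hi
      interval_cases i <;> simp [nbrOp, ind, hb3, hc1, hc0]
      ring
  have e2 : distMat G (ind 1) * distMat G (ind 2) = (b 1 : ℝ) • distMat G (ind 1)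
      + ((b 0 : ℝ) - b 2 - c 2) • distMat G (ind 2) + (c 3 : ℝ) • distMat G (ind 3) := by
    rw [ind_one_mul hdrg, distMat_congr hdrg
      (h' := fun i => b 1 * ind 1 i + ((b 0 : ℝ) - b 2 - c 2) * ind 2 i + c 3 * ind 3 i)]
    · ext x y; simp [distMat]
    · intro i hi
      interval_cases i <;> simp [nbrOp, ind, hb3, hc1, hc0]
      ring
  have hc2' : (c 2 : ℝ) ≠ 0 := by exact_mod_cast hc2
  have hc3' : (c 3 : ℝ) ≠ 0 := by exact_mod_cast hc3
  have h2 : distMat G (ind 2) * M = v₂ • M := by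
    have := congrArg (· * M) e1
    simp only [add_mul, smul_mul_assoc, mul_assoc, h1, h0, mul_smul_comm] at this
    apply smul_right_injective _ hc2'
    simp only [smul_smul]
    rw [hv2, sub_smul, sub_smul, mul_smul, mul_smul, this]
    abel
  have h3 : distMat G (ind 3) * M = v₃ • M := by
    have := congrArg (· * M) e2
    simp only [add_mul, smul_mul_assoc, mul_assoc, h1, h2, mul_smul_comm] at this
    apply smul_right_injective _ hc3'
    simp only [smul_smul]
    rw [hv3, sub_smul, sub_smul, mul_comm θ, mul_smul, mul_smul, mul_smul, this]
    abel
  have e : M = u 0 • distMat G (ind 0) + u 1 • distMat G (ind 1) + u 2 • distMat G (ind 2)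
      + u 3 • distMat G (ind 3) := by
    rw [hM, distMat_congr hdrg
      (h' := fun i => u 0 * ind 0 i + u 1 * ind 1 i + u 2 * ind 2 i + u 3 * ind 3 i)]
    · ext x y; simp [distMat]
    · intro i hi
      interval_cases i <;> simp [ind]
  calc M * M = (u 0 • distMat G (ind 0) + u 1 • distMat G (ind 1) + u 2 • distMat G (ind 2)
      + u 3 • distMat G (ind 3)) * M := by rw [← e]
    _ = _ := by
      simp only [add_mul, smul_mul_assoc, h0, h1, h2, h3, smul_smul, add_smul]

/-- The Delsarte bound: the quadratic form of the positive semidefinite matrix `distMat G u` is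
nonnegative at the indicator vector of a clique. -/
lemma clique_bound (hdrg : IsDRG G 3 b c) (u : ℕ → ℝ) (θ v₂ v₃ : ℝ)
    (hu : ∀ i ≤ 3, nbrOp b c u i = θ * u i) (hc2 : c 2 ≠ 0) (hc3 : c 3 ≠ 0)
    (hv2 : c 2 * v₂ = θ * θ - (b 0 - 1 - b 1) * θ - b 0)
    (hv3 : c 3 * v₃ = θ * v₂ - b 1 * θ - (b 0 - b 2 - c 2) * v₂)
    (hκ : 0 < u 0 + u 1 * θ + u 2 * v₂ + u 3 * v₃)
    (C : Finset V) (hC : ∀ x ∈ C, ∀ y ∈ C, x ≠ y → G.Adj x y) :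
    0 ≤ (#C : ℝ) * (u 0 + (#C - 1) * u 1) := by
  classical
  have hsq := distMat_sq hdrg u θ v₂ v₃ hu hc2 hc3 hv2 hv3
  set κ := u 0 + u 1 * θ + u 2 * v₂ + u 3 * v₃
  have hentry : ∀ x y, ∑ w, u (G.dist w x) * u (G.dist w y) = κ * u (G.dist x y) := by
    intro x y
    have := congrFun (congrFun hsq x) y
    simp only [Matrix.mul_apply, distMat, Matrix.of_apply, Matrix.smul_apply, smul_eq_mul] at this
    rw [← this]
    exact Finset.sum_congr rfl fun w _ => by rw [SimpleGraph.dist_comm]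
  have hsum : ∑ x ∈ C, ∑ y ∈ C, u (G.dist x y) = (#C : ℝ) * (u 0 + (#C - 1) * u 1) := by
    rw [← nsmul_eq_mul]
    apply Finset.sum_eq_card_nsmul
    intro x hx
    rw [← Finset.add_sum_erase _ _ hx, SimpleGraph.dist_self]
    congr 1
    have : ∀ y ∈ C.erase x, u (G.dist x y) = u 1 := by
      intro y hy
      rw [Finset.mem_erase] at hy
      rw [SimpleGraph.dist_eq_one_iff_adj.2 (hC x hx y hy.2 hy.1.symm)]
    rw [Finset.sum_congr rfl this, Finset.sum_const, nsmul_eq_mul, Finset.cast_card_erase_of_mem hx]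
  rw [← hsum]
  refine nonneg_of_mul_nonneg_right (a := κ) ?_ hκ
  have : κ * ∑ x ∈ C, ∑ y ∈ C, u (G.dist x y) = ∑ w, (∑ x ∈ C, u (G.dist w x)) ^ 2 := by
    simp only [Finset.mul_sum, ← hentry, sq, Finset.sum_mul]
    rw [Finset.sum_congr rfl fun x _ => Finset.sum_comm, Finset.sum_comm]
    exact Finset.sum_congr rfl fun w _ => Finset.sum_comm
  rw [this]
  positivity

/-! ### Large cliques in 4-claw-free graphs -/

open Classical in
/-- The neighbours of `x` that are different from and non-adjacent to both `y` and `z`. -/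
noncomputable def farSet (G : SimpleGraph V) (x y z : V) : Finset V :=
  {w | G.Adj x w ∧ ¬ G.Adj y w ∧ ¬ G.Adj z w ∧ w ≠ y ∧ w ≠ z}

lemma mem_farSet {x y z w : V} : w ∈ farSet G x y z ↔
    G.Adj x w ∧ ¬ G.Adj y w ∧ ¬ G.Adj z w ∧ w ≠ y ∧ w ≠ z := by
  simp [farSet]

lemma clique_of_no_claw (hclaw : ¬ HasClaw G 4) {x y z : V} (hxy : G.Adj x y) (hxz : G.Adj x z)
    (hyz : y ≠ z) (hn : ¬ G.Adj y z) {v w : V} (hv : v ∈ farSet G x y z)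
    (hw : w ∈ farSet G x y z) (hvw : v ≠ w) : G.Adj v w := by
  classical
  rw [mem_farSet] at hv hw
  obtain ⟨v1, v2, v3, v4, v5⟩ := hv
  obtain ⟨w1, w2, w3, w4, w5⟩ := hw
  by_contra hadj
  refine hclaw ⟨x, {y, z, v, w}, ?_, ?_, ?_⟩
  · rw [Finset.card_insert_of_notMem, Finset.card_insert_of_notMem, Finset.card_pair hvw]
    · simp [v5.symm, w5.symm]
    · simp [hyz, v4.symm, w4.symm]
  · simp [hxy, hxz, v1, w1]
  · intro p hp q hq _
    simp only [Finset.coe_insert, Finset.coe_singleton, Set.mem_insert_iff,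
      Set.mem_singleton_iff] at hp hq
    have := G.adj_comm
    rcases hp with rfl | rfl | rfl | rfl <;> rcases hq with rfl | rfl | rfl | rfl <;>
      simp_all [G.adj_comm]

open Classical in
/-- Adjacent vertices have `a₁ = b 0 - 1 - b 1` common neighbours. -/
lemma card_common (hdrg : IsDRG G 3 b c) {x y : V} (hxy : G.Adj x y) :
    #{w | G.Adj x w ∧ G.Adj y w} + 1 + b 1 = b 0 := by
  have h := sum_neighbors hdrg (ind 1) x y
  rw [SimpleGraph.dist_eq_one_iff_adj.2 hxy] at h
  simp only [ind, SimpleGraph.dist_eq_one_iff_adj, nbrOp, hdrg.2.2.2.2.1] at h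
  rw [Finset.sum_boole, Finset.filter_filter] at h
  have h' : (#{w | G.Adj x w ∧ G.Adj y w} : ℝ) + 1 + b 1 = b 0 := by
    simp only [and_comm] at h ⊢
    rw [h]; norm_num; ring
  exact_mod_cast h'

open Classical in
lemma card_farSet (hdrg : IsDRG G 3 b c) {x y z : V} (hxy : G.Adj x y) (hxz : G.Adj x z) :
    #{w | G.Adj x w ∧ G.Adj y w ∧ G.Adj z w} + 2 * b 1 ≤ #(farSet G x y z) + b 0 := by
  have hy := card_common hdrg hxy
  have hz := card_common hdrg hxz
  have hx := degree_eq hdrg x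
  have hsub : ({w | G.Adj x w} : Finset V) ⊆ farSet G x y z ∪ ({y, z} ∪
      (({w | G.Adj x w ∧ G.Adj y w} : Finset V) ∪ ({w | G.Adj x w ∧ G.Adj z w} : Finset V))) := by
    intro w hw
    simp only [Finset.mem_union, mem_farSet, Finset.mem_filter, Finset.mem_univ, true_and,
      Finset.mem_insert, Finset.mem_singleton] at hw ⊢
    tauto
  have h1 := (Finset.card_le_card hsub).trans (Finset.card_union_le _ _)
  have h2 := Finset.card_union_le {y, z}
    (({w | G.Adj x w ∧ G.Adj y w} : Finset V) ∪ ({w | G.Adj x w ∧ G.Adj z w} : Finset V))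
  have h3 := Finset.card_union_add_card_inter
    ({w | G.Adj x w ∧ G.Adj y w} : Finset V) ({w | G.Adj x w ∧ G.Adj z w} : Finset V)
  have h4 : ({w | G.Adj x w ∧ G.Adj y w} : Finset V) ∩ ({w | G.Adj x w ∧ G.Adj z w} : Finset V)
      = ({w | G.Adj x w ∧ G.Adj y w ∧ G.Adj z w} : Finset V) := by
    ext w; simp; tauto
  have h5 : #({y, z} : Finset V) ≤ 2 := Finset.card_le_two
  rw [h4] at h3
  omega

/-- A vertex `x` with two distinct non-adjacent neighbours. -/
lemma exists_cherry (hdrg : IsDRG G 3 b c) (h0 : b 0 ≠ 0) (h1 : b 1 ≠ 0) :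
    ∃ x y z, G.Adj x y ∧ G.Adj x z ∧ y ≠ z ∧ G.dist y z = 2 := by
  classical
  obtain ⟨y, -, -⟩ := hdrg.2.1
  have hd := degree_eq hdrg y
  obtain ⟨x, hx⟩ := Finset.card_pos.1 (hd ▸ Nat.pos_of_ne_zero h0)
  have hyx : G.Adj y x := by simpa using hx
  have h := (hdrg.2.2.2.2.2.2 1 (by norm_num) y x (SimpleGraph.dist_eq_one_iff_adj.2 hyx)).2
  obtain ⟨z, hz1, hz2⟩ := Set.nonempty_of_ncard_ne_zero (h ▸ h1)
  refine ⟨x, y, z, hyx.symm, hz1, ?_, hz2⟩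
  rintro rfl
  simp at hz2

lemma not_adj_of_dist_two {W : Type*} {G : SimpleGraph W} {y z : W} (h : G.dist y z = 2) : ¬ G.Adj y z := by
  rw [← SimpleGraph.dist_eq_one_iff_adj]; omega

/-- The Delsarte bound applied to the clique consisting of `x` and the far set of `y, z`. -/
lemma far_bound (hdrg : IsDRG G 3 b c) (hclaw : ¬ HasClaw G 4) (u : ℕ → ℝ) (θ v₂ v₃ : ℝ)
    (hu : ∀ i ≤ 3, nbrOp b c u i = θ * u i) (hc2 : c 2 ≠ 0) (hc3 : c 3 ≠ 0)
    (hv2 : c 2 * v₂ = θ * θ - (b 0 - 1 - b 1) * θ - b 0)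
    (hv3 : c 3 * v₃ = θ * v₂ - b 1 * θ - (b 0 - b 2 - c 2) * v₂)
    (hκ : 0 < u 0 + u 1 * θ + u 2 * v₂ + u 3 * v₃)
    {x y z : V} (hxy : G.Adj x y) (hxz : G.Adj x z) (hyz : G.dist y z = 2) :
    0 ≤ u 0 + #(farSet G x y z) * u 1 := by
  classical
  have hne : y ≠ z := by rintro rfl; simp at hyz
  have hx : x ∉ farSet G x y z := by simp [mem_farSet]
  have h := clique_bound hdrg u θ v₂ v₃ hu hc2 hc3 hv2 hv3 hκ (insert x (farSet G x y z)) (by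
    intro p hp q hq hpq
    rw [Finset.mem_insert] at hp hq
    rcases hp with rfl | hp <;> rcases hq with rfl | hq
    · exact absurd rfl hpq
    · exact (mem_farSet.1 hq).1
    · exact (mem_farSet.1 hp).1.symm
    · exact clique_of_no_claw hclaw hxy hxz hne (not_adj_of_dist_two hyz) hp hq hpq)
  rw [Finset.card_insert_of_notMem hx] at h
  push_cast at h
  rw [add_sub_cancel_right] at h
  exact nonneg_of_mul_nonneg_right h (by positivity)

/-- When `b 2 = 1`, each common neighbour `w` of `y` and `z` at distance 2 from `x` has a unique
antipode (vertex at distance 3) among the neighbours of `x`, and that antipode is far from `y` and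
`z`. The map is injective because `w` is the only neighbour of `y` at distance 3 from the
antipode, again by `b 2 = 1`. -/
lemma taylor_card (hdrg : IsDRG G 3 b c) (hb2 : b 2 = 1)
    {x y z : V} (hxy : G.Adj x y) (hxz : G.Adj x z) (hyz : G.dist y z = 2) :
    c 2 + 2 * b 1 ≤ 2 * #(farSet G x y z) + b 0 + 1 := by
  classical
  have hdrg' := hdrg
  obtain ⟨hconn, -, hD, -, -, -, hn⟩ := hdrg
  have hadj : ∀ {p q : V}, G.Adj p q → G.dist p q = 1 := SimpleGraph.dist_eq_one_iff_adj.2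
  have hfar := card_farSet hdrg' hxy hxz
  have hcn : #{w | G.Adj y w ∧ G.Adj z w} = c 2 := by
    rw [← (hn 2 (by norm_num) y z hyz).1, Set.ncard_eq_toFinset_card']
    congr 1
    ext w
    simp [and_comm, SimpleGraph.dist_eq_one_iff_adj]
  have hsub : ({w | G.Adj y w ∧ G.Adj z w} : Finset V) ⊆ {x} ∪
      (({w | G.Adj x w ∧ G.Adj y w ∧ G.Adj z w} : Finset V) ∪
        ({w | G.dist x w = 2 ∧ G.Adj y w ∧ G.Adj z w} : Finset V)) := by
    intro w hw
    simp only [Finset.mem_union, Finset.mem_filter, Finset.mem_univ, true_and,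
      Finset.mem_singleton] at hw ⊢
    have h1 := hconn.dist_triangle (u := x) (v := y) (w := w)
    rw [hadj hxy, hadj hw.1] at h1
    have h2 : G.dist x w = 0 ∨ G.dist x w = 1 ∨ G.dist x w = 2 := by omega
    rcases h2 with h2 | h2 | h2
    · exact Or.inl (hconn.dist_eq_zero_iff.1 h2).symm
    · exact Or.inr (Or.inl ⟨SimpleGraph.dist_eq_one_iff_adj.1 h2, hw⟩)
    · exact Or.inr (Or.inr ⟨h2, hw⟩)
  have hcard := ((Finset.card_le_card hsub).trans (Finset.card_union_le _ _)).trans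
    (Nat.add_le_add_left (Finset.card_union_le _ _) _)
  rw [hcn, Finset.card_singleton] at hcard
  have hanti : ∀ w, G.dist x w = 2 → ∃ v, G.Adj x v ∧ G.dist w v = 3 := by
    intro w hw
    have h := (hn 2 (by norm_num) w x (by rw [SimpleGraph.dist_comm, hw])).2
    obtain ⟨v, hv1, hv2⟩ := Set.nonempty_of_ncard_ne_zero (by rw [h, hb2]; norm_num)
    exact ⟨v, hv1, hv2⟩
  choose! f hf1 hf2 using hanti
  -- A neighbour `p` of `w` is at distance at least 2 from the antipode `f w`.
  have hge : ∀ w p, G.dist x w = 2 → G.Adj p w → 2 ≤ G.dist p (f w) := by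
    intro w p hw hp
    have := hconn.dist_triangle (u := w) (v := p) (w := f w)
    rw [hf2 w hw, hadj hp.symm] at this
    omega
  have hinj : #({w | G.dist x w = 2 ∧ G.Adj y w ∧ G.Adj z w} : Finset V) ≤ #(farSet G x y z) := by
    apply Finset.card_le_card_of_injOn f
    · intro w hw
      simp only [Finset.coe_filter, Finset.mem_univ, true_and, Set.mem_ofPred_eq] at hw
      obtain ⟨hw, hwy, hwz⟩ := hw
      have h1 := hge w y hw hwy
      have h2 := hge w z hw hwz
      refine mem_farSet.2 ⟨hf1 w hw, fun h => ?_, fun h => ?_, fun h => ?_, fun h => ?_⟩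
      · rw [hadj h] at h1; omega
      · rw [hadj h] at h2; omega
      · rw [h, SimpleGraph.dist_self] at h1; omega
      · rw [h, SimpleGraph.dist_self] at h2; omega
    · intro w hw w' hw' hww
      simp only [Finset.coe_filter, Finset.mem_univ, true_and, Set.mem_ofPred_eq] at hw hw'
      have h1 := hge w y hw.1 hw.2.1
      have h2 := hconn.dist_triangle (u := y) (v := x) (w := f w)
      rw [hadj hxy.symm, hadj (hf1 w hw.1)] at h2
      have h3 : G.dist (f w) y = 2 := by rw [SimpleGraph.dist_comm]; omega
      have h4 := (hn 2 (by norm_num) (f w) y h3).2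
      rw [hb2] at h4
      refine (Set.ncard_le_one_iff (Set.toFinite _)).1 h4.le ⟨hw.2.1, ?_⟩ ⟨hw'.2.1, ?_⟩
      · rw [SimpleGraph.dist_comm, hf2 w hw.1]
      · rw [SimpleGraph.dist_comm, hww, hf2 w' hw'.1]
  omega

end

/-! ### The six arrays -/

/-- A function on `ℕ` with prescribed values at `0, 1, 2, 3`. -/
def seq4 (p q r s : ℝ) : ℕ → ℝ
  | 0 => p
  | 1 => q
  | 2 => r
  | 3 => s
  | _ => 0

/-- there is no 4-claw-free DRG of diameter 3 with intersection array
`{15,8,1;1,8,15}`, `{125,78,1;1,26,125}`, `{155,96,1;1,32,155}`, `{275,168,1;1,56,275}`,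
`{575,348,1;1,116,575}` or `{715,432,25;1,80,675}`. -/
theorem statement16 {V : Type*} [Fintype V] (G : SimpleGraph V) (b c : ℕ → ℕ)
    (hdrg : IsDRG G 3 b c) (hclaw : ¬ HasClaw G 4) :
    ¬ (arr3 b c 15 8 1 1 8 15 ∨
       arr3 b c 125 78 1 1 26 125 ∨
       arr3 b c 155 96 1 1 32 155 ∨
       arr3 b c 275 168 1 1 56 275 ∨
       arr3 b c 575 348 1 1 116 575 ∨
       arr3 b c 715 432 25 1 80 675) := by
  classical
  have hb3 : b 3 = 0 := hdrg.2.2.2.2.2.1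
  have hc0 : c 0 = 0 := hdrg.2.2.2.1
  have hpos : b 0 ≠ 0 → b 1 ≠ 0 → _ := exists_cherry hdrg
  -- In each case the `seq4` is an integral multiple of the cosine sequence of the eigenvalue `-5`,
  -- and the next two numbers are the eigenvalues of the distance-2 and distance-3 matrices on the
  -- `-5`-eigenspace.
  rintro (h | h | h | h | h | h) <;> obtain ⟨h0, h1, h2, h3, h4, h5⟩ := h <;>
    obtain ⟨x, y, z, hxy, hxz, -, hyz⟩ := hpos (by omega) (by omega) <;>
    have hfar := card_farSet hdrg hxy hxz
  · have hd := far_bound hdrg hclaw (seq4 (3) (-1) (1) (-3)) (-5) (5) (-1)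
      (fun i hi => by interval_cases i <;> norm_num [nbrOp, seq4, *])
      (by omega) (by omega) (by norm_num [*]) (by norm_num [*]) (by norm_num [seq4])
      hxy hxz hyz
    have hT := taylor_card hdrg h2 hxy hxz hyz
    have hN : 4 ≤ #(farSet G x y z) := by omega
    have hN' : (4 : ℝ) ≤ #(farSet G x y z) := by exact_mod_cast hN
    simp only [seq4] at hd
    linarith
  · have hd := far_bound hdrg hclaw (seq4 (75) (-3) (1) (-25)) (-5) (5) (-1)
      (fun i hi => by interval_cases i <;> norm_num [nbrOp, seq4, *])
      (by omega) (by omega) (by norm_num [*]) (by norm_num [*]) (by norm_num [seq4])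
      hxy hxz hyz
    have hN : 31 ≤ #(farSet G x y z) := by omega
    have hN' : (31 : ℝ) ≤ #(farSet G x y z) := by exact_mod_cast hN
    simp only [seq4] at hd
    linarith
  · have hd := far_bound hdrg hclaw (seq4 (93) (-3) (1) (-31)) (-5) (5) (-1)
      (fun i hi => by interval_cases i <;> norm_num [nbrOp, seq4, *])
      (by omega) (by omega) (by norm_num [*]) (by norm_num [*]) (by norm_num [seq4])
      hxy hxz hyz
    have hN : 37 ≤ #(farSet G x y z) := by omega
    have hN' : (37 : ℝ) ≤ #(farSet G x y z) := by exact_mod_cast hN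
    simp only [seq4] at hd
    linarith
  · have hd := far_bound hdrg hclaw (seq4 (165) (-3) (1) (-55)) (-5) (5) (-1)
      (fun i hi => by interval_cases i <;> norm_num [nbrOp, seq4, *])
      (by omega) (by omega) (by norm_num [*]) (by norm_num [*]) (by norm_num [seq4])
      hxy hxz hyz
    have hN : 61 ≤ #(farSet G x y z) := by omega
    have hN' : (61 : ℝ) ≤ #(farSet G x y z) := by exact_mod_cast hN
    simp only [seq4] at hd
    linarith
  · have hd := far_bound hdrg hclaw (seq4 (345) (-3) (1) (-115)) (-5) (5) (-1)
      (fun i hi => by interval_cases i <;> norm_num [nbrOp, seq4, *])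
      (by omega) (by omega) (by norm_num [*]) (by norm_num [*]) (by norm_num [seq4])
      hxy hxz hyz
    have hN : 121 ≤ #(farSet G x y z) := by omega
    have hN' : (121 : ℝ) ≤ #(farSet G x y z) := by exact_mod_cast hN
    simp only [seq4] at hd
    linarith
  · have hd := far_bound hdrg hclaw (seq4 (429) (-3) (1) (-15)) (-5) (9) (-5)
      (fun i hi => by interval_cases i <;> norm_num [nbrOp, seq4, *])
      (by omega) (by omega) (by norm_num [*]) (by norm_num [*]) (by norm_num [seq4])
      hxy hxz hyz
    have hN : 149 ≤ #(farSet G x y z) := by omega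
    have hN' : (149 : ℝ) ≤ #(farSet G x y z) := by exact_mod_cast hN
    simp only [seq4] at hd
    linarith
end

section
/- Every distance-regular graph with diameter 3 and intersection array {16,10,1;1,5,16} contains a 4-claw. -/
/-!
Suppose there is no 4-claw, let `xy` be an edge, `N` the set of its 5 common neighbours, and `e`
the number of edges inside `N`. Two estimates of `e` contradict each other.

* `e ≥ 5`: let `M` be the 10 neighbours of `x` other than `y` that are not adjacent to `y`. Without
  a 4-claw, no three vertices of `M` are pairwise nonadjacent, so by Mantel's theorem (`mantel`)
  at most 25 pairs in `M` are nonadjacent. As the local graph at `x` is 5-regular on 16 vertices,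
  the number of nonadjacent pairs in `M` is exactly `30 - e`.

* `e ≤ 4` (`common_edges_le`): the eigenvalue `-4` of the graph has cosine sequence
  `1, -1/4, 1/8, -1/2`, so `W = 8 I - 2 A₁ + A₂ - 4 A₃` is a multiple of its primitive idempotent.
  The intersection array gives `W² = 24 W` (`wMat_sq`), hence `W` is positive semidefinite, and
  its value at `5 e_x + 5 e_y + 3 · 1_N` is `240 - 54 e`.
-/

open SimpleGraph Finset

namespace ClawProof

open Classical in
/-- The number of neighbours of `y` at distance `j` from `x`. -/
noncomputable def cnt {V : Type*} [Fintype V] (G : SimpleGraph V) (x y : V) (j : ℕ) : ℕ :=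
  #{z : V | G.Adj y z ∧ G.dist x z = j}

/-- The numbers of neighbours of `y` at distance `1`, `2`, `3` from `x`, as a function of
`dist x y`. These are the facts about the intersection array used below. -/
lemma cnt_values {V : Type*} [Fintype V] {G : SimpleGraph V} {b c : ℕ → ℕ}
    (hdrg : IsDRG G 3 b c) (harr : arr3 b c 16 10 1 1 5 16) (x y : V) :
    (G.dist x y = 0 ∧ cnt G x y 1 = 16 ∧ cnt G x y 2 = 0 ∧ cnt G x y 3 = 0) ∨
    (G.dist x y = 1 ∧ cnt G x y 1 = 5 ∧ cnt G x y 2 = 10 ∧ cnt G x y 3 = 0) ∨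
    (G.dist x y = 2 ∧ cnt G x y 1 = 5 ∧ cnt G x y 2 = 10 ∧ cnt G x y 3 = 1) ∨
    (G.dist x y = 3 ∧ cnt G x y 1 = 0 ∧ cnt G x y 2 = 16 ∧ cnt G x y 3 = 0) := by
  classical
  obtain ⟨hconn, -, hdiam, hc0, hc1, hb3, hcount⟩ := hdrg
  obtain ⟨h0, h1, h2, -, h5, h6⟩ := harr
  have toCnt : ∀ x y : V, ∀ j, {z : V | G.Adj y z ∧ G.dist x z = j}.ncard = cnt G x y j := by
    intro x y j
    rw [cnt, ← Set.ncard_coe_finset]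
    congr 1
    ext z
    simp
  have zero_of : ∀ j, (∀ z, G.Adj y z → G.dist x z ≠ j) → cnt G x y j = 0 := by
    intro j h
    rw [cnt, Finset.card_eq_zero, Finset.filter_eq_empty_iff]
    rintro z - ⟨hz, hj⟩
    exact h z hz hj
  -- every vertex has valency 16
  have hdeg : #{z : V | G.Adj y z} = 16 := by
    have h := (hcount 0 (by omega) y y (by simp)).2
    rw [toCnt, h0] at h
    rw [← h, cnt]
    congr 1
    ext z
    simp [SimpleGraph.dist_eq_one_iff_adj]
  have hsum : cnt G x y 0 + cnt G x y 1 + cnt G x y 2 + cnt G x y 3 = 16 := by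
    have := Finset.card_eq_sum_card_fiberwise (f := fun z => G.dist x z)
      (s := ({z : V | G.Adj y z} : Finset V)) (t := Finset.range 4)
      (by intro z _; have := hdiam x z; simp; omega)
    rw [hdeg] at this
    simp only [Finset.sum_range_succ, Finset.sum_range_zero, Finset.filter_filter] at this
    simp only [cnt]
    omega
  have htri : ∀ z, G.Adj y z → G.dist x y ≤ G.dist x z + 1 ∧ G.dist x z ≤ G.dist x y + 1 := by
    intro z hz
    have e1 : G.dist y z = 1 := SimpleGraph.dist_eq_one_iff_adj.2 hz
    have t1 := hconn.dist_triangle (u := x) (v := y) (w := z)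
    have t2 := hconn.dist_triangle (u := x) (v := z) (w := y)
    rw [SimpleGraph.dist_comm (u := z)] at t2
    omega
  have key := fun i hi => hcount i hi x y
  simp only [toCnt] at key
  have hd := hdiam x y
  have hcase : G.dist x y = 0 ∨ G.dist x y = 1 ∨ G.dist x y = 2 ∨ G.dist x y = 3 := by omega
  rcases hcase with h | h | h | h
  · have k := key 0 (by omega) h
    have z2 := zero_of 2 (fun z hz => by have := htri z hz; omega)
    have z3 := zero_of 3 (fun z hz => by have := htri z hz; omega)
    norm_num at k
    omega
  · have k := key 1 (by omega) h
    have z3 := zero_of 3 (fun z hz => by have := htri z hz; omega)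
    norm_num at k
    omega
  · have k := key 2 (by omega) h
    have z0 := zero_of 0 (fun z hz => by have := htri z hz; omega)
    norm_num at k
    omega
  · have k := key 3 (by omega) h
    have z0 := zero_of 0 (fun z hz => by have := htri z hz; omega)
    have z1 := zero_of 1 (fun z hz => by have := htri z hz; omega)
    norm_num at k
    omega

/-- The `j`-th distance matrix of `G`. -/
noncomputable def distMat {V : Type*} (G : SimpleGraph V) (j : ℕ) : Matrix V V ℤ :=
  Matrix.of fun u v => if G.dist u v = j then 1 else 0

/-- A scalar multiple of the primitive idempotent of the eigenvalue `-4`, whose cosine sequence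
is `1, -1/4, 1/8, -1/2`. -/
noncomputable def wMat {V : Type*} (G : SimpleGraph V) : Matrix V V ℤ :=
  8 • distMat G 0 - 2 • distMat G 1 + distMat G 2 - 4 • distMat G 3

lemma distMat_mul_one {V : Type*} [Fintype V] (G : SimpleGraph V) (j : ℕ) (u v : V) :
    (distMat G j * distMat G 1) u v = cnt G u v j := by
  classical
  rw [Matrix.mul_apply, cnt, Finset.card_filter]
  push_cast
  refine Finset.sum_congr rfl fun z _ => ?_
  have : G.dist z v = 1 ↔ G.Adj v z := by
    rw [SimpleGraph.dist_eq_one_iff_adj, SimpleGraph.adj_comm]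
  simp only [distMat, Matrix.of_apply, this]
  by_cases h1 : G.dist u z = j <;> by_cases h2 : G.Adj v z <;> simp [h1, h2]

lemma wMat_sq {V : Type*} [Fintype V] {G : SimpleGraph V} {b c : ℕ → ℕ}
    (hdrg : IsDRG G 3 b c) (harr : arr3 b c 16 10 1 1 5 16) :
    wMat G * wMat G = 24 • wMat G := by
  classical
  have e0 : distMat G 0 = 1 := by
    ext u v
    simp only [distMat, Matrix.of_apply, Matrix.one_apply, hdrg.1.dist_eq_zero_iff]
  have e1 : distMat G 1 * distMat G 1
      = 16 • (1 : Matrix V V ℤ) + 5 • distMat G 1 + 5 • distMat G 2 := by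
    rw [← e0]
    ext u v
    rw [distMat_mul_one]
    rcases cnt_values hdrg harr u v with h | h | h | h <;>
      simp [-SimpleGraph.dist_eq_zero_iff_eq_or_not_reachable, -SimpleGraph.dist_eq_one_iff_adj,
        distMat, h]
  have e2 : distMat G 2 * distMat G 1
      = 10 • distMat G 1 + 10 • distMat G 2 + 16 • distMat G 3 := by
    ext u v
    rw [distMat_mul_one]
    rcases cnt_values hdrg harr u v with h | h | h | h <;>
      simp [-SimpleGraph.dist_eq_zero_iff_eq_or_not_reachable, -SimpleGraph.dist_eq_one_iff_adj,
        distMat, h]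
  have e3 : distMat G 3 * distMat G 1 = distMat G 2 := by
    ext u v
    rw [distMat_mul_one]
    rcases cnt_values hdrg harr u v with h | h | h | h <;>
      simp [-SimpleGraph.dist_eq_zero_iff_eq_or_not_reachable, -SimpleGraph.dist_eq_one_iff_adj,
        distMat, h]
  have w1 : wMat G * distMat G 1 = -4 • wMat G := by
    simp only [wMat, e0, sub_mul, add_mul, smul_mul_assoc, e1, e2, e3, one_mul]
    module
  have w2 : wMat G * distMat G 2 = 4 • wMat G := by
    have h := congrArg (wMat G * ·) e1
    simp only [mul_add, ← mul_assoc, w1, mul_smul_comm, smul_mul_assoc, mul_one] at h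
    ext u v
    have := congrFun (congrFun h u) v
    simp only [Matrix.add_apply, Matrix.smul_apply] at this ⊢
    simp only [nsmul_eq_mul, zsmul_eq_mul] at this ⊢
    push_cast at this ⊢
    linarith
  have w3 : wMat G * distMat G 3 = - wMat G := by
    have h := congrArg (wMat G * ·) e2
    simp only [mul_add, ← mul_assoc, w1, w2, mul_smul_comm, smul_mul_assoc] at h
    ext u v
    have := congrFun (congrFun h u) v
    simp only [Matrix.add_apply, Matrix.smul_apply, Matrix.neg_apply] at this ⊢
    simp only [nsmul_eq_mul, zsmul_eq_mul] at this ⊢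
    push_cast at this ⊢
    linarith
  conv_lhs => rhs; rw [wMat]
  simp only [e0, mul_sub, mul_add, mul_smul_comm, w1, w2, w3, mul_one]
  module

/-- The matrix `wMat G` is positive semidefinite, being symmetric with `W² = 24 W`. -/
lemma wMat_nonneg {V : Type*} [Fintype V] {G : SimpleGraph V} {b c : ℕ → ℕ}
    (hdrg : IsDRG G 3 b c) (harr : arr3 b c 16 10 1 1 5 16) (g : V → ℤ) :
    0 ≤ g ⬝ᵥ (wMat G).mulVec g := by
  have hsymm : (wMat G).transpose = wMat G := by
    ext u v
    simp only [wMat, distMat, Matrix.transpose_apply, Matrix.add_apply, Matrix.sub_apply,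
      Matrix.smul_apply, Matrix.of_apply, SimpleGraph.dist_comm (u := v)]
  have h : (wMat G).mulVec g ⬝ᵥ (wMat G).mulVec g = 24 * (g ⬝ᵥ (wMat G).mulVec g) := by
    rw [Matrix.dotProduct_mulVec, ← Matrix.mulVec_transpose, hsymm, Matrix.mulVec_mulVec,
      wMat_sq hdrg harr, Matrix.smul_mulVec, smul_dotProduct, dotProduct_comm]
    simp
  have h2 : 0 ≤ (wMat G).mulVec g ⬝ᵥ (wMat G).mulVec g :=
    Finset.sum_nonneg fun i _ => mul_self_nonneg _
  omega

open Classical in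
/-- The common neighbours of `x` and `y`. -/
noncomputable def common {V : Type*} [Fintype V] (G : SimpleGraph V) (x y : V) : Finset V :=
  {z : V | G.Adj x z ∧ G.Adj y z}

lemma card_common {V : Type*} [Fintype V] {G : SimpleGraph V} {b c : ℕ → ℕ}
    (hdrg : IsDRG G 3 b c) (harr : arr3 b c 16 10 1 1 5 16) {x y : V} (hxy : G.Adj x y) :
    #(common G x y) = 5 := by
  classical
  have hd := SimpleGraph.dist_eq_one_iff_adj.2 hxy
  have h := cnt_values hdrg harr x y
  have : cnt G x y 1 = #(common G x y) := by
    rw [cnt, common]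
    congr 1
    ext z
    simp [SimpleGraph.dist_eq_one_iff_adj, and_comm]
  omega

open Classical in
/-- Evaluating the positive semidefinite form `wMat G` at `5 e_x + 5 e_y + 3 · 1_N`, with `N` the
common neighbourhood of the edge `xy`, bounds the number of edges inside `N` by `4`. -/
lemma common_edges_le {V : Type*} [Fintype V] {G : SimpleGraph V} {b c : ℕ → ℕ}
    (hdrg : IsDRG G 3 b c) (harr : arr3 b c 16 10 1 1 5 16) {x y : V} (hxy : G.Adj x y) :
    27 * ∑ u ∈ common G x y, #{v ∈ common G x y | G.Adj u v} ≤ 240 := by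
  set N := common G x y with hN
  have hcard : #N = 5 := card_common hdrg harr hxy
  have memN : ∀ z, z ∈ N ↔ G.Adj x z ∧ G.Adj y z := by intro z; simp [hN, common]
  have w_self : ∀ u, wMat G u u = 8 := by intro u; simp [wMat, distMat]
  have w_adj : ∀ u v, G.Adj u v → wMat G u v = -2 := by
    intro u v h
    have h1 := SimpleGraph.dist_eq_one_iff_adj.2 h
    simp [-SimpleGraph.dist_eq_zero_iff_eq_or_not_reachable, -SimpleGraph.dist_eq_one_iff_adj,
      wMat, distMat, h1]
  -- two distinct nonadjacent vertices of `N` are at distance 2, as both are adjacent to `x`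
  have w_non : ∀ u ∈ N, ∀ v ∈ N, u ≠ v → ¬ G.Adj u v → wMat G u v = 1 := by
    intro u hu v hv hne hna
    have h1 : G.dist u x = 1 := SimpleGraph.dist_eq_one_iff_adj.2 ((memN u).1 hu).1.symm
    have h2 : G.dist x v = 1 := SimpleGraph.dist_eq_one_iff_adj.2 ((memN v).1 hv).1
    have ht := hdrg.1.dist_triangle (u := u) (v := x) (w := v)
    have h0 : G.dist u v ≠ 0 := fun h => hne (hdrg.1.dist_eq_zero_iff.1 h)
    have h3 : G.dist u v ≠ 1 := fun h => hna (SimpleGraph.dist_eq_one_iff_adj.1 h)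
    have : G.dist u v = 2 := by omega
    simp [-SimpleGraph.dist_eq_zero_iff_eq_or_not_reachable, -SimpleGraph.dist_eq_one_iff_adj,
      wMat, distMat, this]
  have w_row : ∀ u ∈ N, ∑ v ∈ N, wMat G u v = 12 - 3 * (#{v ∈ N | G.Adj u v} : ℤ) := by
    intro u hu
    have : ∀ v ∈ N, wMat G u v
        = 1 + (if u = v then 7 else 0) - 3 * (if G.Adj u v then 1 else 0) := by
      intro v hv
      by_cases h : u = v
      · subst h; simp [w_self]
      · by_cases h' : G.Adj u v
        · simp [w_adj _ _ h', h, h']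
        · simp [w_non u hu v hv h h', h, h']
    rw [Finset.sum_congr rfl this, Finset.sum_sub_distrib, Finset.sum_add_distrib,
      ← Finset.mul_sum]
    simp [hu, hcard]
  let g : V → ℤ := fun z => 5 * (if z = x then 1 else 0) + 5 * (if z = y then 1 else 0)
    + 3 * (if z ∈ N then 1 else 0)
  have hdot : ∀ F : V → ℤ, g ⬝ᵥ F = 5 * F x + 5 * F y + 3 * ∑ u ∈ N, F u := by
    intro F
    simp [dotProduct, g, add_mul, Finset.sum_add_distrib, ← Finset.mul_sum]
  have hF : ∀ u, (wMat G).mulVec g u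
      = 5 * wMat G u x + 5 * wMat G u y + 3 * ∑ v ∈ N, wMat G u v := by
    intro u
    rw [Matrix.mulVec, dotProduct_comm, hdot]
  have hpos := wMat_nonneg hdrg harr g
  rw [hdot, hF, hF] at hpos
  have sx : ∑ v ∈ N, wMat G x v = -10 := by
    rw [Finset.sum_congr rfl fun v hv => w_adj x v ((memN v).1 hv).1]
    simp [hcard]
  have sy : ∑ v ∈ N, wMat G y v = -10 := by
    rw [Finset.sum_congr rfl fun v hv => w_adj y v ((memN v).1 hv).2]
    simp [hcard]
  have sN : ∑ u ∈ N, (wMat G).mulVec g u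
      = 80 - 9 * ∑ u ∈ N, (#{v ∈ N | G.Adj u v} : ℤ) := by
    have : ∀ u ∈ N, (wMat G).mulVec g u = 16 - 9 * (#{v ∈ N | G.Adj u v} : ℤ) := by
      intro u hu
      rw [hF, w_row u hu, w_adj u x ((memN u).1 hu).1.symm, w_adj u y ((memN u).1 hu).2.symm]
      ring
    rw [Finset.sum_congr rfl this, Finset.sum_sub_distrib, ← Finset.mul_sum]
    simp [hcard]
  rw [sx, sy, sN, w_self, w_self, w_adj x y hxy, w_adj y x hxy.symm] at hpos
  zify
  linarith

/-- Mantel's theorem in degree-sum form, for a relation restricted to a finite set. -/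
lemma mantel {V : Type*} [DecidableEq V] (M : Finset V) (R : V → V → Prop) [DecidableRel R]
    (hsymm : ∀ u v, R u v → R v u)
    (hfree : ∀ u ∈ M, ∀ v ∈ M, ∀ w ∈ M, R u v → R u w → R v w → False) :
    2 * ∑ u ∈ M, #{v ∈ M | R u v} ≤ #M * #M := by
  set d : V → ℕ := fun u => #{v ∈ M | R u v} with hd
  -- the neighbourhoods of two related points are disjoint
  have hpair : ∀ u ∈ M, ∀ v ∈ M, R u v → d u + d v ≤ #M := by
    intro u hu v hv huv
    rw [hd]
    simp only
    rw [← Finset.card_union_of_disjoint]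
    · exact Finset.card_le_card (by intro z; simp; tauto)
    · rw [Finset.disjoint_left]
      intro w hw hw'
      simp only [Finset.mem_filter] at hw hw'
      exact hfree u hu v hv w hw.1 huv hw.2 hw'.2
  have h1 : ∑ u ∈ M, ∑ v ∈ M with R u v, (d u + d v) ≤ #M * ∑ u ∈ M, d u := by
    rw [Finset.mul_sum]
    refine Finset.sum_le_sum fun u hu => ?_
    refine (Finset.sum_le_card_nsmul _ _ #M fun v hv => ?_).trans ?_
    · simp only [Finset.mem_filter] at hv
      exact hpair u hu v hv.1 hv.2
    · simp [hd, mul_comm]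
  have h2 : ∑ u ∈ M, ∑ v ∈ M with R u v, d u = ∑ u ∈ M, d u ^ 2 := by
    refine Finset.sum_congr rfl fun u _ => ?_
    simp [hd, sq]
  have h3 : ∑ u ∈ M, ∑ v ∈ M with R u v, d v = ∑ u ∈ M, d u ^ 2 := by
    rw [← h2]
    simp only [Finset.sum_filter]
    rw [Finset.sum_comm]
    refine Finset.sum_congr rfl fun u _ => Finset.sum_congr rfl fun v _ => ?_
    simp only [show R v u ↔ R u v from ⟨hsymm _ _, hsymm _ _⟩]
  simp only [Finset.sum_add_distrib] at h1
  rw [h2, h3] at h1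
  have h4 := sq_sum_le_card_mul_sum_sq (s := M) (f := d)
  rcases Nat.eq_zero_or_pos (∑ u ∈ M, d u) with h | h
  · rw [h]; simp
  · refine Nat.le_of_mul_le_mul_right ?_ h
    nlinarith

end ClawProof

open ClawProof in
/-- every DRG of diameter 3 with intersection array `{16,10,1;1,5,16}`
contains a 4-claw. -/
theorem statement18 {V : Type*} [Fintype V] (G : SimpleGraph V) (b c : ℕ → ℕ)
    (hdrg : IsDRG G 3 b c) (harr : arr3 b c 16 10 1 1 5 16) :
    HasClaw G 4 := by
  classical
  by_contra hclaw
  obtain ⟨x⟩ := hdrg.1.nonempty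
  have hdegx : #{z : V | G.Adj x z} = 16 := by
    have h := cnt_values hdrg harr x x
    have hc : cnt G x x 1 = #{z : V | G.Adj x z} := by
      rw [cnt]
      congr 1
      ext z
      simp [SimpleGraph.dist_eq_one_iff_adj]
    have h0 : G.dist x x = 0 := SimpleGraph.dist_self
    omega
  obtain ⟨y, hy⟩ : ({z : V | G.Adj x z} : Finset V).Nonempty := by
    rw [← Finset.card_pos]; omega
  have hxy : G.Adj x y := by simpa using hy
  set N := common G x y with hN
  have memN : ∀ z, z ∈ N ↔ G.Adj x z ∧ G.Adj y z := by intro z; simp [hN, common]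
  have hcardN : #N = 5 := card_common hdrg harr hxy
  let M : Finset V := {z : V | G.Adj x z ∧ ¬ G.Adj y z ∧ z ≠ y}
  have memM : ∀ z, z ∈ M ↔ G.Adj x z ∧ ¬ G.Adj y z ∧ z ≠ y := by intro z; simp [M]
  have hcover : ({z : V | G.Adj x z} : Finset V) = insert y (N ∪ M) := by
    ext z
    simp only [Finset.mem_filter, Finset.mem_univ, true_and, Finset.mem_insert,
      Finset.mem_union, memN, memM]
    by_cases hz : z = y
    · subst hz; simp [hxy]
    · simp only [hz]; tauto
  have hyNM : y ∉ N ∪ M := by simp [memN, memM]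
  have hdisj : Disjoint N M := by
    rw [Finset.disjoint_left]
    intro z h1 h2
    exact ((memM z).1 h2).2.1 ((memN z).1 h1).2
  have hcardM : #M = 10 := by
    rw [hcover, Finset.card_insert_of_notMem hyNM, Finset.card_union_of_disjoint hdisj] at hdegx
    omega
  -- the neighbours of `u` inside the local graph at `x`, split along `{y}`, `N`, `M`
  have hsplit : ∀ u, G.Adj x u → (if G.Adj u y then 1 else 0) + #{v ∈ N | G.Adj u v}
      + #{v ∈ M | G.Adj u v} = 5 := by
    intro u hu
    have h5 := card_common hdrg harr hu
    have : common G x u = {v ∈ ({z : V | G.Adj x z} : Finset V) | G.Adj u v} := by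
      ext z; simp [common]
    rw [this, hcover, Finset.card_filter, Finset.sum_insert hyNM,
      Finset.sum_union hdisj, ← Finset.card_filter, ← Finset.card_filter] at h5
    omega
  have hNsum : ∑ u ∈ N, #{v ∈ N | G.Adj u v} + ∑ u ∈ N, #{v ∈ M | G.Adj u v} = 20 := by
    rw [← Finset.sum_add_distrib, Finset.sum_congr rfl (g := fun _ => 4)]
    · simp [hcardN]
    · intro u hu
      have h := hsplit u ((memN u).1 hu).1
      rw [if_pos ((memN u).1 hu).2.symm] at h
      omega
  have hMsum : ∑ u ∈ M, #{v ∈ N | G.Adj u v} + ∑ u ∈ M, #{v ∈ M | G.Adj u v} = 50 := by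
    rw [← Finset.sum_add_distrib, Finset.sum_congr rfl (g := fun _ => 5)]
    · simp [hcardM]
    · intro u hu
      have h := hsplit u ((memM u).1 hu).1
      rw [if_neg fun h => ((memM u).1 hu).2.1 h.symm] at h
      omega
  have hdouble : ∑ u ∈ N, #{v ∈ M | G.Adj u v} = ∑ u ∈ M, #{v ∈ N | G.Adj u v} := by
    simp only [Finset.card_filter]
    rw [Finset.sum_comm]
    simp only [SimpleGraph.adj_comm]
  have hcompl : ∑ u ∈ M, #{v ∈ M | G.Adj u v} + ∑ u ∈ M, #{v ∈ M | u ≠ v ∧ ¬ G.Adj u v}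
      = 90 := by
    rw [← Finset.sum_add_distrib, Finset.sum_congr rfl (g := fun _ => 9)]
    · simp [hcardM]
    · intro u hu
      have h := Finset.card_erase_of_mem hu
      rw [← Finset.card_filter_add_card_filter_not (G.Adj u)] at h
      have h1 : {v ∈ M.erase u | G.Adj u v} = {v ∈ M | G.Adj u v} := by
        ext v
        have := G.ne_of_adj (a := u) (b := v)
        simp only [Finset.mem_filter, Finset.mem_erase]
        grind
      have h2 : {v ∈ M.erase u | ¬ G.Adj u v} = {v ∈ M | u ≠ v ∧ ¬ G.Adj u v} := by
        ext v
        simp only [Finset.mem_filter, Finset.mem_erase]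
        grind
      rw [h1, h2] at h
      omega
  -- three pairwise nonadjacent vertices of `M` would form a 4-claw together with `y`
  have hmantel := mantel M (fun u v => u ≠ v ∧ ¬ G.Adj u v)
    (fun u v h => ⟨h.1.symm, fun h' => h.2 h'.symm⟩) (by
      intro u hu v hv w hw huv huw hvw
      rw [memM] at hu hv hw
      refine hclaw ⟨x, {y, u, v, w}, ?_, ?_, ?_⟩
      · rw [Finset.card_insert_of_notMem, Finset.card_insert_of_notMem,
          Finset.card_insert_of_notMem, Finset.card_singleton]
        · simpa using hvw.1
        · simp [huv.1, huw.1]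
        · simp [hu.2.2.symm, hv.2.2.symm, hw.2.2.symm]
      · simp [hxy, hu.1, hv.1, hw.1]
      · intro p hp q hq hpq hadj
        simp only [Finset.coe_insert, Finset.coe_singleton, Set.mem_insert_iff,
          Set.mem_singleton_iff] at hp hq
        have hadj' := hadj.symm
        rcases hp with rfl | rfl | rfl | rfl <;> rcases hq with rfl | rfl | rfl | rfl <;> tauto)
  have hpsd : 27 * ∑ u ∈ N, #{v ∈ N | G.Adj u v} ≤ 240 := common_edges_le hdrg harr hxy
  rw [hcardM] at hmantel
  omega
end
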